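/- Let φ ∈ Ξ_p be such that lim_{x→0⁺} φ_p(x)/φ(x) = 0 and lim_{x→0⁺} √(−x log x)/φ(x) = 0. Let (x_n) be a sequence in C₀([0,1], G(ℝ^d)) converging pointwise (for each t ∈ [0,1]) to x ∈ C₀([0,1], G(ℝ^d)), and assume sup_n ‖x_n‖_{φ_p} < ∞. Then d_φ(x_n, x) → 0 as n → ∞. -/

import Mathlib

/-!
The homogeneous norm is comparable, up to a constant depending on `d`, with the gauge
`max (|g¹ᵢ|, |g²ᵢⱼ|^{1/2})`. The bound of the entries by the length of a product of exponentials is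
an induction on the number of factors (`entryLe_prodL`). Conversely `g = exp(g¹) ⊗ (0, A)` with `A`
antisymmetric, and `(0, A)` is a product of commutators
`exp x ⊗ exp y ⊗ exp (-x) ⊗ exp (-y) = (0, x yᵀ - y xᵀ)` (`EntryLe.reach`).

Through this comparison, the bound `‖(x_n)_{s,t}‖ ≤ K φ_p(t - s)` becomes a bound on entries and
hence passes to the pointwise limit `x`. Consequently `‖(x_n)_{s,t}⁻¹ ⊗ x_{s,t}‖ ≤ C φ_p(t - s)`,
which is at most `ε φ(t - s)` for `t - s < δ` since `φ_p = o(φ)`. For `t - s ≥ δ` one has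
`φ(t - s) ≥ φ(min δ 1) > 0`, and uniform smallness of the numerator suffices; it follows from the
uniform convergence of the entries (`uniform_of_modulus`, `entryLe_inc_diff`), for which `φ_p` is a
common modulus, as `φ_p = o(φ)` with `φ` bounded forces `φ_p → 0` at `0⁺`.

The function `φ_p` is strictly positive on `(0,1]`, because the integrand of `ζ` is integrable,
being `O(u^{-3/4})`; so no quotient by `φ_p` degenerates.
-/

noncomputable section

open scoped BigOperators
open MeasureTheory Filter Matrix

namespace PaperFV

/-- `Vec d` is `ℝ^d`. -/
abbrev Vec (d : ℕ) := Fin d → ℝ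

/-- `Mat d` is the space of real `d × d` matrices. -/
abbrev Mat (d : ℕ) := Matrix (Fin d) (Fin d) ℝ

/-- The Euclidean norm on `ℝ^d`. -/
def enorm {d : ℕ} (x : Vec d) : ℝ := Real.sqrt (∑ i, (x i) ^ 2)

/-- The defining condition of the step-2 free nilpotent group over `ℝ^d`:
the symmetric part of the second component equals `½ g¹ (g¹)ᵀ`. -/
def IsG {d : ℕ} (g : Vec d × Mat d) : Prop :=
  g.2 + g.2ᵀ = Matrix.vecMulVec g.1 g.1

/-- The step-2 free nilpotent group `G(ℝ^d)`. -/
def G (d : ℕ) : Type := { g : Vec d × Mat d // IsG g }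

namespace G

variable {d : ℕ}

/-- Group multiplication `g ⊗ h = (g¹ + h¹, g² + g¹ (h¹)ᵀ + h²)`. -/
def mul (g h : G d) : G d :=
  ⟨(g.1.1 + h.1.1, g.1.2 + Matrix.vecMulVec g.1.1 h.1.1 + h.1.2), by
    have hg := g.2
    have hh := h.2
    simp only [IsG] at *
    ext i j
    have hg' := congrFun (congrFun hg i) j
    have hh' := congrFun (congrFun hh i) j
    simp only [Matrix.add_apply, Matrix.transpose_apply, Matrix.vecMulVec_apply,
      Pi.add_apply] at *
    nlinarith [hg', hh']⟩

/-- The identity element `e = (0, 0)`. -/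
def one : G d :=
  ⟨(0, 0), by
    ext i j
    simp [IsG, Matrix.vecMulVec_apply]⟩

/-- The inverse `g⁻¹ = (−g¹, g¹ (g¹)ᵀ − g²)`. -/
def inv (g : G d) : G d :=
  ⟨(-g.1.1, Matrix.vecMulVec g.1.1 g.1.1 - g.1.2), by
    have hg := g.2
    simp only [IsG] at *
    ext i j
    have hg' := congrFun (congrFun hg i) j
    simp only [Matrix.add_apply, Matrix.sub_apply, Matrix.transpose_apply,
      Matrix.vecMulVec_apply, Pi.neg_apply] at *
    nlinarith [hg']⟩

/-- `exp x = (x, ½ x xᵀ)`. -/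
def gexp (x : Vec d) : G d :=
  ⟨(x, (2⁻¹ : ℝ) • Matrix.vecMulVec x x), by
    ext i j
    simp only [IsG, Matrix.add_apply, Matrix.transpose_apply, Matrix.smul_apply,
      Matrix.vecMulVec_apply, smul_eq_mul]
    ring⟩

/-- The dilation `δ_t (g¹, g²) = (t g¹, t² g²)`. -/
def dil (t : ℝ) (g : G d) : G d :=
  ⟨(t • g.1.1, (t ^ 2) • g.1.2), by
    have hg := g.2
    simp only [IsG] at *
    ext i j
    have hg' := congrFun (congrFun hg i) j
    simp only [Matrix.add_apply, Matrix.transpose_apply, Matrix.smul_apply,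
      Matrix.vecMulVec_apply, Pi.smul_apply, smul_eq_mul] at *
    nlinarith [hg']⟩

/-- Product of a list of group elements. -/
def prodL : List (G d) → G d
  | [] => one
  | g :: l => mul g (prodL l)

/-- The homogeneous (Carnot–Carathéodory) norm:
`‖g‖ = inf { Σ |xᵢ| : exp(x₁) ⊗ ⋯ ⊗ exp(xₙ) = g }`. -/
def gnorm (g : G d) : ℝ :=
  sInf { r | ∃ l : List (Vec d), prodL (l.map gexp) = g ∧ r = (l.map enorm).sum }

/-- The left-invariant distance `d(g, h) = ‖h⁻¹ ⊗ g‖`. -/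
def gdist (g h : G d) : ℝ := gnorm (mul (inv h) g)

end G

open G

/-- A continuous `G(ℝ^d)`-valued path on `[0,1]` started at the identity. -/
def IsPath {d : ℕ} (x : ℝ → G d) : Prop :=
  ContinuousOn (fun t => (x t).1) (Set.Icc 0 1) ∧ x 0 = one

/-- The increment `x_{s,t} = x_s⁻¹ ⊗ x_t`. -/
def inc {d : ℕ} (x : ℝ → G d) (s t : ℝ) : G d := mul (inv (x s)) (x t)

/-- The set of values whose supremum is `d_∞(x,y)`. -/
def dInfSet {d : ℕ} (x y : ℝ → G d) : Set ℝ :=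
  { r | ∃ s t : ℝ, 0 ≤ s ∧ s < t ∧ t ≤ 1 ∧
      r = gnorm (mul (inv (inc x s t)) (inc y s t)) }

/-- `d_∞(x,y) = sup_{0 ≤ s < t ≤ 1} ‖x_{s,t}⁻¹ ⊗ y_{s,t}‖`. -/
def dInf {d : ℕ} (x y : ℝ → G d) : ℝ := sSup (dInfSet x y)

/-- The set of values whose supremum is `d_φ(x,y)`. -/
def dPhiSet {d : ℕ} (φ : ℝ → ℝ) (x y : ℝ → G d) : Set ℝ :=
  { r | ∃ s t : ℝ, 0 ≤ s ∧ s < t ∧ t ≤ 1 ∧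
      r = gnorm (mul (inv (inc x s t)) (inc y s t)) / φ (t - s) }

/-- `d_φ(x,y) = sup_{0 ≤ s < t ≤ 1} ‖x_{s,t}⁻¹ ⊗ y_{s,t}‖ / φ(t-s)`. -/
def dPhi {d : ℕ} (φ : ℝ → ℝ) (x y : ℝ → G d) : ℝ := sSup (dPhiSet φ x y)

/-- The set of values whose supremum is `‖x‖_φ`. -/
def normPhiSet {d : ℕ} (φ : ℝ → ℝ) (x : ℝ → G d) : Set ℝ :=
  { r | ∃ s t : ℝ, 0 ≤ s ∧ s < t ∧ t ≤ 1 ∧ r = gnorm (inc x s t) / φ (t - s) }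

/-- `‖x‖_φ = sup_{0 ≤ s < t ≤ 1} ‖x_{s,t}‖ / φ(t-s)`. -/
def normPhi {d : ℕ} (φ : ℝ → ℝ) (x : ℝ → G d) : ℝ := sSup (normPhiSet φ x)

/-- `‖x‖_∞ = sup_{0 ≤ s < t ≤ 1} ‖x_{s,t}‖`. -/
def normInf {d : ℕ} (x : ℝ → G d) : ℝ :=
  sSup { r | ∃ s t : ℝ, 0 ≤ s ∧ s < t ∧ t ≤ 1 ∧ r = gnorm (inc x s t) }

/-- The class `Ξ_p` of functions `φ : [0,1] → [0,∞)` with `φ(0) = 0` such that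
`φ^p` is strictly increasing and convex. -/
def Xi (p : ℝ) (φ : ℝ → ℝ) : Prop :=
  φ 0 = 0 ∧ (∀ x ∈ Set.Icc (0:ℝ) 1, 0 ≤ φ x) ∧
    StrictMonoOn (fun x => φ x ^ p) (Set.Icc (0:ℝ) 1) ∧
    ConvexOn ℝ (Set.Icc (0:ℝ) 1) (fun x => φ x ^ p)

/-- `ζ(x) = (1/(2√2)) ∫₀^x √( log(1 + 1/u²) / u ) du`. -/
def zeta (x : ℝ) : ℝ :=
  (1 / (2 * Real.sqrt 2)) * ∫ u in (0:ℝ)..x, Real.sqrt (Real.log (1 + 1 / u ^ 2) / u)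

/-- The smallest convex function on `[0,1]` dominating `ζ^p`. -/
def convEnv (p : ℝ) (x : ℝ) : ℝ :=
  sInf { y | ∃ g : ℝ → ℝ, ConvexOn ℝ (Set.Icc (0:ℝ) 1) g ∧
    (∀ z ∈ Set.Icc (0:ℝ) 1, zeta z ^ p ≤ g z) ∧ y = g x }

/-- `φ_p`, the `p`-th root of the smallest convex function on `[0,1]` dominating `ζ^p`. -/
def phiP (p : ℝ) (x : ℝ) : ℝ := convEnv p x ^ (1 / p)

/-- The piecewise "linear" (with dilated increments) dyadic approximation `Υ_n(x)`:
`Υ_n(x)_{k/2ⁿ + t} = x_{k/2ⁿ} ⊗ δ_{2ⁿ t}(x_{k/2ⁿ, (k+1)/2ⁿ})` for `t ∈ [0, 2⁻ⁿ]`. -/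
def upsilon {d : ℕ} (n : ℕ) (x : ℝ → G d) : ℝ → G d := fun u =>
  let k : ℤ := ⌊(2 : ℝ) ^ n * u⌋
  mul (x ((k : ℝ) / 2 ^ n))
    (dil ((2 : ℝ) ^ n * u - (k : ℝ)) (inc x ((k : ℝ) / 2 ^ n) (((k : ℝ) + 1) / 2 ^ n)))


/-! ### The comparison of the homogeneous norm with matrix entries -/

/-- `g` is a product of exponentials of total length at most `r`. -/
def Reach {d : ℕ} (g : G d) (r : ℝ) : Prop :=
  ∃ l : List (Vec d), prodL (l.map gexp) = g ∧ (l.map enorm).sum ≤ r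

/-- The entries of `g¹` are bounded by `r` and those of `g²` by `r²`: up to a constant depending
on `d`, the smallest such `r ≥ 0` is the homogeneous norm of `g`. -/
def EntryLe {d : ℕ} (g : G d) (r : ℝ) : Prop :=
  (∀ i, |g.1.1 i| ≤ r) ∧ ∀ i j, |g.1.2 i j| ≤ r ^ 2

theorem enorm_nonneg' {d : ℕ} (x : Vec d) : 0 ≤ enorm x := Real.sqrt_nonneg _

theorem abs_le_enorm {d : ℕ} (x : Vec d) (i : Fin d) : |x i| ≤ enorm x := by
  unfold enorm
  rw [← Real.sqrt_sq_eq_abs]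
  exact Real.sqrt_le_sqrt
    (Finset.single_le_sum (f := fun i => x i ^ 2) (fun i _ => sq_nonneg _) (Finset.mem_univ i))

theorem enorm_le_sum {d : ℕ} (x : Vec d) : enorm x ≤ ∑ i, |x i| := by
  unfold enorm
  have h0 : 0 ≤ ∑ i, |x i| := Finset.sum_nonneg fun i _ => abs_nonneg _
  rw [Real.sqrt_le_left h0]
  have := Finset.sum_sq_le_sq_sum_of_nonneg (s := Finset.univ) (f := fun i => |x i|)
    (fun i _ => abs_nonneg _)
  simpa using this

theorem G_ext {d : ℕ} {g h : G d} (h1 : g.1.1 = h.1.1) (h2 : g.1.2 = h.1.2) : g = h :=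
  Subtype.ext (Prod.ext h1 h2)

theorem mul_assoc' {d : ℕ} (a b c : G d) : mul (mul a b) c = mul a (mul b c) := by
  apply G_ext
  · simp only [mul]
    abel
  · ext i j
    simp only [mul, Matrix.add_apply, Matrix.vecMulVec_apply, Pi.add_apply]
    ring

theorem one_mul' {d : ℕ} (a : G d) : mul one a = a := by
  apply G_ext
  · simp [mul, G.one]
  · ext i j
    simp [mul, G.one, Matrix.vecMulVec_apply]

theorem prodL_append {d : ℕ} (l m : List (G d)) : prodL (l ++ m) = mul (prodL l) (prodL m) := by
  induction l with
  | nil => simp [prodL, one_mul']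
  | cons a l ih => simp [prodL, ih, mul_assoc']

theorem Reach.mul {d : ℕ} {g h : G d} {r s : ℝ} (hg : Reach g r) (hh : Reach h s) :
    Reach (G.mul g h) (r + s) := by
  obtain ⟨l, hl, hl'⟩ := hg
  obtain ⟨m, hm, hm'⟩ := hh
  refine ⟨l ++ m, ?_, ?_⟩
  · rw [List.map_append, prodL_append, hl, hm]
  · rw [List.map_append, List.sum_append]
    linarith

theorem reach_one {d : ℕ} : Reach (one : G d) 0 := ⟨[], rfl, by simp⟩

/-- Summation of central elements: on the centre `{g¹ = 0}` the product is the addition of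
second components. -/
theorem reach_central_sum {d : ℕ} {ι : Type*} (S : Finset ι) (X : ι → G d) (c : ℝ)
    (hX : ∀ i, (X i).1.1 = 0) (hr : ∀ i, Reach (X i) c) :
    ∃ B : G d, B.1.1 = 0 ∧ B.1.2 = ∑ i ∈ S, (X i).1.2 ∧ Reach B (S.card * c) := by
  classical
  induction S using Finset.induction_on with
  | empty => exact ⟨G.one, rfl, by simp [G.one], by simpa using reach_one⟩
  | insert a S ha ih =>
    obtain ⟨B, h1, h2, h3⟩ := ih
    refine ⟨mul (X a) B, ?_, ?_, ?_⟩
    · simp [mul, hX, h1]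
    · rw [Finset.sum_insert ha, ← h2]
      ext i j
      simp [mul, hX, Matrix.vecMulVec_apply]
    · have := (hr a).mul h3
      rw [Finset.card_insert_of_notMem ha]
      convert this using 1
      push_cast
      ring

/-- The commutator `exp x ⊗ exp y ⊗ exp (-x) ⊗ exp (-y) = (0, x yᵀ - y xᵀ)`. -/
theorem reach_comm {d : ℕ} (x y : Vec d) :
    ∃ B : G d, B.1.1 = 0 ∧ (∀ i j, B.1.2 i j = x i * y j - y i * x j) ∧
      Reach B (2 * enorm x + 2 * enorm y) := by
  have hn : ∀ z : Vec d, enorm (-z) = enorm z := fun z => by simp [enorm]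
  refine ⟨prodL ([x, y, -x, -y].map gexp), ?_, ?_, ⟨_, rfl, ?_⟩⟩
  · simp [prodL, mul, gexp, G.one]
  · intro i j
    simp [prodL, mul, gexp, G.one, Matrix.vecMulVec_apply]
    ring
  · simp only [List.map_cons, List.map_nil, List.sum_cons, List.sum_nil, hn]
    linarith

theorem enorm_single {d : ℕ} (i : Fin d) (a : ℝ) : enorm (Pi.single i a : Vec d) ≤ |a| := by
  refine (enorm_le_sum _).trans (le_of_eq ?_)
  rw [Finset.sum_eq_single i]
  · simp
  · intro b _ hb
    simp [hb]
  · simp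

/-- The elementary area element `(0, a (E_kl - E_lk))` with `|a| ≤ r²` has length at most `4 r`. -/
theorem reach_elem {d : ℕ} (k l : Fin d) (a r : ℝ) (hr : 0 ≤ r) (ha : |a| ≤ r ^ 2) :
    ∃ B : G d, B.1.1 = 0 ∧
      B.1.2 = a • (Matrix.single k l (1 : ℝ) - Matrix.single l k (1 : ℝ)) ∧
      Reach B (4 * r) := by
  obtain ⟨u, v, huv, hu, hv⟩ : ∃ u v : ℝ, u * v = a ∧ |u| ≤ r ∧ |v| ≤ r := by
    rcases eq_or_lt_of_le hr with h | h
    · subst h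
      have : a = 0 := by simpa using ha
      exact ⟨0, 0, by simp [this], by simp, by simp⟩
    · refine ⟨r, a / r, by field_simp, by rw [abs_of_pos h], ?_⟩
      rw [abs_div, abs_of_pos h, div_le_iff₀ h]
      nlinarith
  obtain ⟨B, h1, h2, h3⟩ := reach_comm (Pi.single k u : Vec d) (Pi.single l v)
  refine ⟨B, h1, ?_, ?_⟩
  · ext i j
    rw [h2, ← huv]
    have hv : ∀ (m n : Fin d) (c : ℝ),
        (Pi.single m c : Vec d) n = c * (if n = m then 1 else 0) := by
      intro m n c
      simp [Pi.single_apply]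
    have hM : ∀ m n : Fin d, Matrix.single m n (1 : ℝ) i j
        = (if i = m then 1 else 0) * (if j = n then 1 else 0) := by
      intro m n
      simp only [Matrix.single_apply]
      split_ifs <;> simp_all
    simp only [Matrix.smul_apply, Matrix.sub_apply, hM, hv, smul_eq_mul]
    ring
  · obtain ⟨m, hm, hm'⟩ := h3
    refine ⟨m, hm, hm'.trans ?_⟩
    have := enorm_single k u
    have := enorm_single l v
    linarith

/-- The decomposition `g = exp(g¹) ⊗ (0, A)` with `A` antisymmetric,
`A = ∑ₖₗ ½ Aₖₗ (E_kl - E_lk)`, bounds the length of `g` by its entries. -/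
theorem EntryLe.reach {d : ℕ} {g : G d} {r : ℝ} (hr : 0 ≤ r) (h : EntryLe g r) :
    Reach g ((d + 4 * d ^ 2) * r) := by
  obtain ⟨h1, h2⟩ := h
  have hg := g.2
  set A : Mat d := fun i j => g.1.2 i j - 2⁻¹ * (g.1.1 i * g.1.1 j) with hA
  have hanti : ∀ i j, A j i = - A i j := by
    intro i j
    have := congrFun (congrFun hg i) j
    simp only [Matrix.add_apply, Matrix.transpose_apply, Matrix.vecMulVec_apply] at this
    simp only [hA]
    linarith
  have hAb : ∀ i j, |2⁻¹ * A i j| ≤ r ^ 2 := by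
    intro i j
    have e1 : |g.1.1 i * g.1.1 j| ≤ r * r := by
      rw [abs_mul]
      exact mul_le_mul (h1 i) (h1 j) (abs_nonneg _) hr
    have e2 := h2 i j
    simp only [hA]
    rw [abs_le] at *
    constructor <;> nlinarith
  choose X hX1 hX2 hX3 using fun q : Fin d × Fin d =>
    reach_elem q.1 q.2 (2⁻¹ * A q.1 q.2) r hr (hAb _ _)
  obtain ⟨B, hB1, hB2, hB3⟩ := reach_central_sum Finset.univ X (4 * r) hX1 hX3
  have hB2' : B.1.2 = A := by
    rw [hB2]
    ext i j
    rw [Matrix.sum_apply]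
    simp only [hX2, Matrix.smul_apply, Matrix.sub_apply, smul_eq_mul, mul_sub,
      Finset.sum_sub_distrib, Fintype.sum_prod_type, Matrix.single_apply]
    have e1 : ∑ k, ∑ l, 2⁻¹ * A k l * (if k = i ∧ l = j then (1 : ℝ) else 0) = 2⁻¹ * A i j := by
      rw [Finset.sum_eq_single i, Finset.sum_eq_single j] <;> simp +contextual
    have e2 : ∑ k, ∑ l, 2⁻¹ * A k l * (if l = i ∧ k = j then (1 : ℝ) else 0) = 2⁻¹ * A j i := by
      rw [Finset.sum_eq_single j, Finset.sum_eq_single i] <;> simp +contextual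
    rw [e1, e2, hanti i j]
    ring
  have hgB : G.mul (gexp g.1.1) B = g := by
    apply G_ext
    · simp [mul, gexp, hB1]
    · ext i j
      have hBij : B.1.2 i j = A i j := by rw [hB2']
      simp [mul, gexp, hB1, hBij, hA, Matrix.vecMulVec_apply]
  have hexp : Reach (gexp g.1.1) (d * r) := by
    refine ⟨[g.1.1], ?_, ?_⟩
    · apply G_ext
      · simp [prodL, mul, G.one]
      · ext i j
        simp [prodL, mul, G.one, Matrix.vecMulVec_apply]
    · simp only [List.map_cons, List.map_nil, List.sum_cons, List.sum_nil, add_zero]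
      refine (enorm_le_sum _).trans ((Finset.sum_le_card_nsmul _ _ r fun i _ => h1 i).trans ?_)
      simp
  have := hexp.mul hB3
  rw [hgB] at this
  convert this using 1
  simp
  ring

theorem exists_reach {d : ℕ} (g : G d) : ∃ r, Reach g r := by
  set M : ℝ := 1 + ∑ i, |g.1.1 i| + ∑ i, ∑ j, |g.1.2 i j| with hM
  have n1 : 0 ≤ ∑ i, |g.1.1 i| := Finset.sum_nonneg fun i _ => abs_nonneg _
  have n2 : 0 ≤ ∑ i, ∑ j, |g.1.2 i j| :=
    Finset.sum_nonneg fun i _ => Finset.sum_nonneg fun i _ => abs_nonneg _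
  have hM0 : 1 ≤ M := by linarith
  refine ⟨_, EntryLe.reach (r := M) (by linarith) ⟨fun i => ?_, fun i j => ?_⟩⟩
  · have := Finset.single_le_sum (f := fun i => |g.1.1 i|) (fun i _ => abs_nonneg _)
      (Finset.mem_univ i)
    linarith
  · have e1 := Finset.single_le_sum (f := fun j => |g.1.2 i j|) (fun i _ => abs_nonneg _)
      (Finset.mem_univ j)
    have e2 := Finset.single_le_sum (f := fun i => ∑ j, |g.1.2 i j|)
      (fun i _ => Finset.sum_nonneg fun i _ => abs_nonneg _) (Finset.mem_univ i)
    nlinarith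

theorem gnorm_bddBelow {d : ℕ} (g : G d) :
    BddBelow { r | ∃ l : List (Vec d), prodL (l.map gexp) = g ∧ r = (l.map enorm).sum } := by
  refine ⟨0, ?_⟩
  rintro _ ⟨l, -, rfl⟩
  refine List.sum_nonneg fun a ha => ?_
  obtain ⟨x, -, rfl⟩ := List.mem_map.1 ha
  exact enorm_nonneg' x

theorem gnorm_nonneg {d : ℕ} (g : G d) : 0 ≤ gnorm g := by
  refine Real.sInf_nonneg ?_
  rintro _ ⟨l, -, rfl⟩
  refine List.sum_nonneg fun a ha => ?_
  obtain ⟨x, -, rfl⟩ := List.mem_map.1 ha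
  exact enorm_nonneg' x

theorem Reach.gnorm_le {d : ℕ} {g : G d} {r : ℝ} (h : Reach g r) : gnorm g ≤ r := by
  obtain ⟨l, hl, hl'⟩ := h
  exact (csInf_le (gnorm_bddBelow g) ⟨l, hl, rfl⟩).trans hl'

/-- Each product of exponentials has entries bounded by its length. -/
theorem entryLe_prodL {d : ℕ} (l : List (Vec d)) :
    0 ≤ (l.map enorm).sum ∧ EntryLe (prodL (l.map gexp)) (l.map enorm).sum := by
  induction l with
  | nil => exact ⟨by simp, by simp [prodL, G.one], by simp [prodL, G.one]⟩
  | cons x l ih =>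
    obtain ⟨h0, h1, h2⟩ := ih
    simp only [List.map_cons, List.sum_cons, prodL]
    have hx := enorm_nonneg' x
    refine ⟨by linarith, fun i => ?_, fun i j => ?_⟩
    · simp only [mul, gexp, Pi.add_apply]
      exact (abs_add_le _ _).trans (add_le_add (abs_le_enorm x i) (h1 i))
    · simp only [mul, gexp, Matrix.add_apply, Matrix.smul_apply, Matrix.vecMulVec_apply,
        smul_eq_mul]
      have e1 : |x i * x j| ≤ enorm x * enorm x := by
        rw [abs_mul]
        exact mul_le_mul (abs_le_enorm x i) (abs_le_enorm x j) (abs_nonneg _) hx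
      have e2 : |x i * (prodL (l.map gexp)).1.1 j| ≤ enorm x * (l.map enorm).sum := by
        rw [abs_mul]
        exact mul_le_mul (abs_le_enorm x i) (h1 j) (abs_nonneg _) hx
      have e3 := h2 i j
      rw [abs_le] at *
      constructor <;> nlinarith [mul_nonneg hx h0, mul_nonneg hx hx]

theorem EntryLe.mono {d : ℕ} {g : G d} {r s : ℝ} (h0 : 0 ≤ r) (hrs : r ≤ s) (h : EntryLe g r) :
    EntryLe g s :=
  ⟨fun i => (h.1 i).trans hrs, fun i j => (h.2 i j).trans (pow_le_pow_left₀ h0 hrs 2)⟩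

theorem entryLe_gnorm {d : ℕ} (g : G d) : EntryLe g (gnorm g) := by
  have hne : { r | ∃ l : List (Vec d), prodL (l.map gexp) = g ∧
      r = (l.map enorm).sum }.Nonempty := by
    obtain ⟨r, l, hl, -⟩ := exists_reach g
    exact ⟨_, l, hl, rfl⟩
  constructor
  · intro i
    refine le_csInf hne ?_
    rintro _ ⟨l, rfl, rfl⟩
    exact (entryLe_prodL l).2.1 i
  · intro i j
    have : Real.sqrt |g.1.2 i j| ≤ gnorm g := by
      refine le_csInf hne ?_
      rintro _ ⟨l, rfl, rfl⟩
      rw [Real.sqrt_le_left (entryLe_prodL l).1]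
      exact (entryLe_prodL l).2.2 i j
    rwa [Real.sqrt_le_left (gnorm_nonneg g)] at this

theorem inv_mul_fst {d : ℕ} (g h : G d) (i : Fin d) :
    (mul (inv g) h).1.1 i = h.1.1 i - g.1.1 i := by
  simp [mul, G.inv]
  ring

theorem inv_mul_snd {d : ℕ} (g h : G d) (i j : Fin d) :
    (mul (inv g) h).1.2 i j
      = h.1.2 i j - g.1.2 i j - g.1.1 i * (h.1.1 j - g.1.1 j) := by
  simp [mul, G.inv, Matrix.vecMulVec_apply]
  ring

theorem EntryLe.inv_mul {d : ℕ} {g h : G d} {r : ℝ} (hr : 0 ≤ r) (hg : EntryLe g r)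
    (hh : EntryLe h r) : EntryLe (mul (inv g) h) (2 * r) := by
  have hd : ∀ i, |h.1.1 i - g.1.1 i| ≤ 2 * r := fun i => by
    have e1 := hg.1 i
    have e2 := hh.1 i
    rw [abs_le] at *
    constructor <;> linarith
  refine ⟨fun i => ?_, fun i j => ?_⟩
  · rw [inv_mul_fst]
    exact hd i
  · rw [inv_mul_snd]
    have e1 := hg.2 i j
    have e2 := hh.2 i j
    have e3 : |g.1.1 i * (h.1.1 j - g.1.1 j)| ≤ r * (2 * r) := by
      rw [abs_mul]
      exact mul_le_mul (hg.1 i) (hd j) (abs_nonneg _) hr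
    rw [abs_le] at *
    constructor <;> nlinarith

/-! ### Positivity and boundedness of `φ_p` -/

theorem zeta_integrand_le {u : ℝ} (hu : 0 < u) (hu1 : u ≤ 1) :
    Real.sqrt (Real.log (1 + 1 / u ^ 2) / u) ≤ 3 * u ^ (-(3 / 4) : ℝ) := by
  have h1 : Real.log (1 + 1 / u ^ 2) ≤ (1 + 1 / u ^ 2) ^ (1 / 4 : ℝ) / (1 / 4) :=
    Real.log_le_rpow_div (by positivity) (by norm_num)
  have h2 : 1 + 1 / u ^ 2 ≤ 16 * u ^ (-2 : ℝ) := by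
    have : u ^ (-2 : ℝ) = 1 / u ^ 2 := by
      rw [Real.rpow_neg hu.le]
      norm_num
    rw [this]
    have : 1 ≤ 1 / u ^ 2 := by
      rw [le_div_iff₀ (by positivity)]
      nlinarith
    linarith
  have h3 : (1 + 1 / u ^ 2) ^ (1 / 4 : ℝ) ≤ 2 * u ^ (-(1 / 2) : ℝ) := by
    refine (Real.rpow_le_rpow (by positivity) h2 (by norm_num)).trans (le_of_eq ?_)
    rw [Real.mul_rpow (by norm_num) (by positivity), ← Real.rpow_mul hu.le]
    congr 1
    · rw [show (16 : ℝ) = 2 ^ (4 : ℝ) by norm_num, ← Real.rpow_mul (by norm_num)]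
      norm_num
    · norm_num
  have h4 : Real.log (1 + 1 / u ^ 2) / u ≤ 8 * u ^ (-(3 / 2) : ℝ) := by
    have : u ^ (-(3 / 2) : ℝ) = u ^ (-(1 / 2) : ℝ) / u := by
      rw [← Real.rpow_sub_one hu.ne']
      norm_num
    rw [this, ← mul_div_assoc]
    gcongr
    linarith
  rw [Real.sqrt_le_left (by positivity)]
  refine h4.trans ?_
  have : (3 * u ^ (-(3 / 4) : ℝ)) ^ 2 = 9 * u ^ (-(3 / 2) : ℝ) := by
    rw [mul_pow, ← Real.rpow_natCast (u ^ (-(3 / 4) : ℝ)), ← Real.rpow_mul hu.le]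
    norm_num
  rw [this]
  have : 0 ≤ u ^ (-(3 / 2) : ℝ) := by positivity
  linarith

theorem zeta_integrable {x : ℝ} (hx : 0 ≤ x) (hx1 : x ≤ 1) :
    IntervalIntegrable (fun u : ℝ => Real.sqrt (Real.log (1 + 1 / u ^ 2) / u)) volume 0 x := by
  have h : IntervalIntegrable (fun u : ℝ => 3 * u ^ (-(3 / 4) : ℝ)) volume 0 x :=
    (intervalIntegral.intervalIntegrable_rpow' (by norm_num)).const_mul 3
  refine h.mono_fun ?_ ?_
  · refine Measurable.aestronglyMeasurable ?_
    fun_prop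
  · rw [Set.uIoc_of_le hx]
    filter_upwards [ae_restrict_mem measurableSet_Ioc] with u hu
    rw [Real.norm_of_nonneg (Real.sqrt_nonneg _)]
    exact (zeta_integrand_le hu.1 (hu.2.trans hx1)).trans (le_abs_self _)

theorem zeta_pos {x : ℝ} (hx : 0 < x) (hx1 : x ≤ 1) : 0 < zeta x := by
  unfold zeta
  refine mul_pos (by positivity) ?_
  refine intervalIntegral.intervalIntegral_pos_of_pos_on (zeta_integrable hx.le hx1) ?_ hx
  intro u hu
  have hu0 : 0 < u := hu.1
  refine Real.sqrt_pos.2 (div_pos (Real.log_pos ?_) hu0)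
  have : 0 < 1 / u ^ 2 := by positivity
  linarith

theorem zeta_nonneg {x : ℝ} (hx : 0 ≤ x) (hx1 : x ≤ 1) : 0 ≤ zeta x := by
  rcases hx.eq_or_lt with h | h
  · simp [zeta, ← h]
  · exact (zeta_pos h hx1).le

theorem zeta_le_one {x : ℝ} (hx : 0 ≤ x) (hx1 : x ≤ 1) : zeta x ≤ zeta 1 := by
  unfold zeta
  refine mul_le_mul_of_nonneg_left ?_ (by positivity)
  exact intervalIntegral.integral_mono_interval le_rfl hx hx1
    (Eventually.of_forall fun u => Real.sqrt_nonneg _) (zeta_integrable zero_le_one le_rfl)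

theorem convEnv_bounds {p x : ℝ} (hp : 0 < p) (hx : 0 ≤ x) (hx1 : x ≤ 1) :
    zeta x ^ p ≤ convEnv p x ∧ convEnv p x ≤ zeta 1 ^ p := by
  -- The constant `ζ(1)^p` is a convex majorant, so the infimum is over a nonempty set.
  have hmem : zeta 1 ^ p ∈ { y | ∃ g : ℝ → ℝ, ConvexOn ℝ (Set.Icc (0:ℝ) 1) g ∧
      (∀ z ∈ Set.Icc (0:ℝ) 1, zeta z ^ p ≤ g z) ∧ y = g x } :=
    ⟨fun _ => zeta 1 ^ p, convexOn_const _ (convex_Icc 0 1), fun z hz =>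
      Real.rpow_le_rpow (zeta_nonneg hz.1 hz.2) (zeta_le_one hz.1 hz.2) hp.le, rfl⟩
  have hlow : ∀ y ∈ { y | ∃ g : ℝ → ℝ, ConvexOn ℝ (Set.Icc (0:ℝ) 1) g ∧
      (∀ z ∈ Set.Icc (0:ℝ) 1, zeta z ^ p ≤ g z) ∧ y = g x }, zeta x ^ p ≤ y := by
    rintro _ ⟨g, -, hg, rfl⟩
    exact hg x ⟨hx, hx1⟩
  exact ⟨le_csInf ⟨_, hmem⟩ hlow, csInf_le ⟨_, hlow⟩ hmem⟩

theorem phiP_pos {p x : ℝ} (hp : 0 < p) (hx : 0 < x) (hx1 : x ≤ 1) : 0 < phiP p x :=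
  Real.rpow_pos_of_pos
    ((Real.rpow_pos_of_pos (zeta_pos hx hx1) p).trans_le (convEnv_bounds hp hx.le hx1).1) _

theorem phiP_le {p x : ℝ} (hp : 0 < p) (hx : 0 ≤ x) (hx1 : x ≤ 1) :
    phiP p x ≤ zeta 1 := by
  have h := convEnv_bounds hp hx hx1
  have h0 : 0 ≤ convEnv p x := (Real.rpow_nonneg (zeta_nonneg hx hx1) p).trans h.1
  refine (Real.rpow_le_rpow h0 h.2 (by positivity)).trans (le_of_eq ?_)
  rw [← Real.rpow_mul (zeta_nonneg zero_le_one le_rfl), mul_one_div_cancel hp.ne', Real.rpow_one]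

theorem Xi.mono {p : ℝ} {φ : ℝ → ℝ} (hp : 0 < p) (hφ : Xi p φ) {s t : ℝ} (hs : 0 ≤ s)
    (hst : s ≤ t) (ht : t ≤ 1) : φ s ≤ φ t := by
  obtain ⟨-, h1, h2, -⟩ := hφ
  have hs' : s ∈ Set.Icc (0 : ℝ) 1 := ⟨hs, hst.trans ht⟩
  have ht' : t ∈ Set.Icc (0 : ℝ) 1 := ⟨hs.trans hst, ht⟩
  exact (Real.rpow_le_rpow_iff (h1 s hs') (h1 t ht') hp).1 (h2.monotoneOn hs' ht' hst)

theorem Xi.pos {p : ℝ} {φ : ℝ → ℝ} (hp : 0 < p) (hφ : Xi p φ) {t : ℝ} (h0 : 0 < t)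
    (ht : t ≤ 1) : 0 < φ t := by
  obtain ⟨h, h1, h2, -⟩ := hφ
  have ht' : t ∈ Set.Icc (0 : ℝ) 1 := ⟨h0.le, ht⟩
  have := h2 (Set.left_mem_Icc.2 zero_le_one) ht' h0
  simp only [h, Real.zero_rpow hp.ne'] at this
  refine lt_of_le_of_ne (h1 t ht') fun h' => ?_
  rw [← h', Real.zero_rpow hp.ne'] at this
  exact lt_irrefl _ this

/-- `φ_p = o(φ)` and the boundedness of `φ` give `φ_p → 0` at `0⁺`. -/
theorem phiP_tendsto {p : ℝ} {φ : ℝ → ℝ} (hp : 0 < p) (hφ : Xi p φ)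
    (hlim : Tendsto (fun x => phiP p x / φ x) (nhdsWithin 0 (Set.Ioi 0)) (nhds 0)) :
    Tendsto (phiP p) (nhdsWithin 0 (Set.Ioi 0)) (nhds 0) := by
  have h1 : Tendsto (fun x => phiP p x / φ x * φ 1) (nhdsWithin 0 (Set.Ioi 0)) (nhds 0) := by
    simpa using hlim.mul_const (φ 1)
  have hev : ∀ᶠ x : ℝ in nhdsWithin 0 (Set.Ioi 0), 0 < x ∧ x < 1 :=
    Ioo_mem_nhdsGT zero_lt_one
  refine squeeze_zero' ?_ ?_ h1
  · filter_upwards [hev] with x hx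
    exact (phiP_pos hp hx.1 hx.2.le).le
  · filter_upwards [hev] with x hx
    have hφx := hφ.pos hp hx.1 hx.2.le
    have := hφ.mono hp hx.1.le hx.2.le le_rfl
    have h0 := (phiP_pos hp hx.1 hx.2.le).le
    calc phiP p x = phiP p x / φ x * φ x := by field_simp
      _ ≤ phiP p x / φ x * φ 1 := by gcongr

/-! ### Uniform convergence -/

/-- Pointwise convergence on `[0,1]` with a common modulus of continuity is uniform. -/
theorem uniform_of_modulus (f : ℕ → ℝ → ℝ) (f₀ ω : ℝ → ℝ)
    (hω : Tendsto ω (nhdsWithin 0 (Set.Ioi 0)) (nhds 0))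
    (hf : ∀ n s t, 0 ≤ s → s < t → t ≤ 1 → |f n t - f n s| ≤ ω (t - s))
    (hlim : ∀ t ∈ Set.Icc (0 : ℝ) 1, Tendsto (fun n => f n t) atTop (nhds (f₀ t)))
    {ε : ℝ} (hε : 0 < ε) :
    ∀ᶠ n in atTop, ∀ t ∈ Set.Icc (0 : ℝ) 1, |f n t - f₀ t| ≤ ε := by
  have hf₀ : ∀ s t, 0 ≤ s → s < t → t ≤ 1 → |f₀ t - f₀ s| ≤ ω (t - s) := by
    intro s t hs hst ht
    exact le_of_tendsto (((hlim t ⟨hs.trans hst.le, ht⟩).sub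
      (hlim s ⟨hs, hst.le.trans ht⟩)).abs) (Eventually.of_forall fun n => hf n s t hs hst ht)
  have hev : ∀ᶠ h in nhdsWithin (0 : ℝ) (Set.Ioi 0), ω h < ε / 3 :=
    hω.eventually_lt_const (by positivity)
  obtain ⟨δ, hδ, hδω⟩ := mem_nhdsGT_iff_exists_Ioo_subset.1 hev
  have hδ : 0 < δ := hδ
  obtain ⟨M, hM⟩ := exists_nat_gt (1 / δ)
  have hM0 : (0 : ℝ) < M := lt_trans (by positivity) hM
  have hgrid : ∀ᶠ n in atTop, ∀ k ∈ Finset.range (M + 1),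
      |f n ((k : ℝ) / M) - f₀ ((k : ℝ) / M)| < ε / 3 := by
    rw [Filter.eventually_all_finset]
    intro k hk
    have hk' : (k : ℝ) ≤ M := by
      exact_mod_cast Nat.lt_succ_iff.1 (Finset.mem_range.1 hk)
    have := hlim ((k : ℝ) / M) ⟨by positivity, (div_le_one hM0).2 hk'⟩
    have := (Metric.tendsto_nhds.1 this) (ε / 3) (by positivity)
    simpa [Real.dist_eq] using this
  filter_upwards [hgrid] with n hn t ht
  set k := ⌊t * M⌋₊ with hk
  have htM : 0 ≤ t * M := mul_nonneg ht.1 hM0.le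
  have hk1 : (k : ℝ) ≤ t * M := Nat.floor_le htM
  have hk2 : t * M < k + 1 := Nat.lt_floor_add_one _
  have hkM : k ∈ Finset.range (M + 1) := by
    rw [Finset.mem_range, Nat.lt_succ_iff]
    have : (k : ℝ) ≤ M := hk1.trans (by nlinarith [ht.2])
    exact_mod_cast this
  have hg := hn k hkM
  set s : ℝ := (k : ℝ) / M with hs
  have hs0 : 0 ≤ s := by positivity
  have hst : s ≤ t := by rw [hs, div_le_iff₀ hM0]; exact hk1
  rcases hst.eq_or_lt with h | h
  · rw [← h]
    linarith
  · have hts : t - s < δ := by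
      have e1 : t < (k + 1) / M := by rw [lt_div_iff₀ hM0]; exact hk2
      have e2 : 1 / (M : ℝ) < δ := by
        rw [div_lt_iff₀ hM0]
        rw [div_lt_iff₀ hδ] at hM
        linarith
      rw [add_div] at e1
      linarith
    have hω' : ω (t - s) < ε / 3 := hδω ⟨sub_pos.2 h, hts⟩
    have e1 := hf n s t hs0 h ht.2
    have e2 := hf₀ s t hs0 h ht.2
    rw [abs_le] at *
    rw [abs_lt] at hg
    constructor <;> linarith

/-- Closeness of increments in the group from closeness of entries: the off-diagonal terms of the
second level are controlled by the bound `B` on the first level. -/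
theorem entryLe_inc_diff {d : ℕ} (x y : ℝ → G d) (s t B τ η : ℝ)
    (hη : 2 * τ ≤ η) (hη2 : (2 + 8 * B) * τ ≤ η ^ 2)
    (hxB : ∀ u ∈ Set.Icc (0 : ℝ) 1, ∀ i, |(x u).1.1 i| ≤ B)
    (hyB : ∀ u ∈ Set.Icc (0 : ℝ) 1, ∀ i, |(y u).1.1 i| ≤ B)
    (h1 : ∀ i, ∀ u ∈ Set.Icc (0 : ℝ) 1, |(x u).1.1 i - (y u).1.1 i| ≤ τ)
    (h2 : ∀ i j, ∀ u ∈ Set.Icc (0 : ℝ) 1, |(x u).1.2 i j - (y u).1.2 i j| ≤ τ)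
    (hs : s ∈ Set.Icc (0 : ℝ) 1) (ht : t ∈ Set.Icc (0 : ℝ) 1) :
    EntryLe (mul (inv (inc x s t)) (inc y s t)) η := by
  have mulb : ∀ a b A' B' : ℝ, |a| ≤ A' → |b| ≤ B' → |a * b| ≤ A' * B' := by
    intro a b A' B' ha hb
    rw [abs_mul]
    exact mul_le_mul ha hb (abs_nonneg _) ((abs_nonneg _).trans ha)
  refine ⟨fun i => ?_, fun i j => ?_⟩
  · rw [inv_mul_fst]
    simp only [inc, inv_mul_fst]
    have e1 := h1 i s hs
    have e2 := h1 i t ht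
    rw [abs_le] at *
    constructor <;> linarith
  · rw [inv_mul_snd]
    simp only [inc, inv_mul_fst, inv_mul_snd]
    have dj : |((y t).1.1 j - (y s).1.1 j) - ((x t).1.1 j - (x s).1.1 j)| ≤ 2 * τ := by
      have e1 := h1 j s hs
      have e2 := h1 j t ht
      rw [abs_le] at *
      constructor <;> linarith
    have ixj : |(x t).1.1 i - (x s).1.1 i| ≤ 2 * B := by
      have e1 := hxB s hs i
      have e2 := hxB t ht i
      rw [abs_le] at *
      constructor <;> linarith
    have iyj : |(y t).1.1 j - (y s).1.1 j| ≤ 2 * B := by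
      have e1 := hyB s hs j
      have e2 := hyB t ht j
      rw [abs_le] at *
      constructor <;> linarith
    have f1 := h2 i j s hs
    have f2 := h2 i j t ht
    have f3 := mulb _ _ _ _ (h1 i s hs) iyj
    have f4 := mulb _ _ _ _ (hxB s hs i) dj
    have f5 := mulb _ _ _ _ ixj dj
    rw [abs_le] at *
    constructor <;> nlinarith

/-- If `x_n → x` pointwise with `sup_n ‖x_n‖_{φ_p} < ∞`, and
`φ ∈ Ξ_p` satisfies `φ_p = o(φ)` and `√(−x log x) = o(φ)` at `0⁺`, then
`d_φ(x_n, x) → 0`. -/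
theorem dPhi_convergence_of_pointwise (d : ℕ) (hd : 2 ≤ d) (p : ℝ) (hp : 2 < p ∧ p < 3)
    (φ : ℝ → ℝ) (hφ : Xi p φ)
    (hlim1 : Tendsto (fun x => phiP p x / φ x) (nhdsWithin 0 (Set.Ioi 0)) (nhds 0))
    (hlim2 : Tendsto (fun x => Real.sqrt (-x * Real.log x) / φ x)
      (nhdsWithin 0 (Set.Ioi 0)) (nhds 0))
    (xs : ℕ → ℝ → G d) (x : ℝ → G d) (hxs : ∀ n, IsPath (xs n)) (hx : IsPath x)
    (hptwise : ∀ t ∈ Set.Icc (0 : ℝ) 1, Tendsto (fun n => (xs n t).1) atTop (nhds (x t).1))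
    (hbdd : ∃ K : ℝ, ∀ n, ∀ r ∈ normPhiSet (phiP p) (xs n), r ≤ K) :
    Tendsto (fun n => dPhi φ (xs n) x) atTop (nhds 0) := by
  have hp0 : 0 < p := by linarith [hp.1]
  obtain ⟨K₀, hK₀⟩ := hbdd
  set K : ℝ := max K₀ 0 with hK
  have hK0 : 0 ≤ K := le_max_right _ _
  have hinc : ∀ n s t, 0 ≤ s → s < t → t ≤ 1 →
      EntryLe (inc (xs n) s t) (K * phiP p (t - s)) := by
    intro n s t hs hst ht
    have hpos := phiP_pos hp0 (sub_pos.2 hst) (by linarith : t - s ≤ 1)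
    have := hK₀ n _ ⟨s, t, hs, hst, ht, rfl⟩
    rw [div_le_iff₀ hpos] at this
    exact (entryLe_gnorm _).mono (gnorm_nonneg _)
      (this.trans (mul_le_mul_of_nonneg_right (le_max_left _ _) hpos.le))
  have lim1 : ∀ i, ∀ t ∈ Set.Icc (0 : ℝ) 1,
      Tendsto (fun n => (xs n t).1.1 i) atTop (nhds ((x t).1.1 i)) := fun i t ht =>
    (((continuous_apply i).comp continuous_fst).tendsto _).comp (hptwise t ht)
  have lim2 : ∀ i j, ∀ t ∈ Set.Icc (0 : ℝ) 1,
      Tendsto (fun n => (xs n t).1.2 i j) atTop (nhds ((x t).1.2 i j)) := fun i j t ht =>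
    (((continuous_apply_apply i j).comp continuous_snd).tendsto _).comp (hptwise t ht)
  -- The entry bounds pass to the pointwise limit.
  have hincx : ∀ s t, 0 ≤ s → s < t → t ≤ 1 → EntryLe (inc x s t) (K * phiP p (t - s)) := by
    intro s t hs hst ht
    have hs' : s ∈ Set.Icc (0 : ℝ) 1 := ⟨hs, hst.le.trans ht⟩
    have ht' : t ∈ Set.Icc (0 : ℝ) 1 := ⟨hs.trans hst.le, ht⟩
    refine ⟨fun i => ?_, fun i j => ?_⟩
    · have := fun n => (hinc n s t hs hst ht).1 i
      simp only [inc, inv_mul_fst] at this ⊢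
      exact le_of_tendsto ((lim1 i t ht').sub (lim1 i s hs')).abs (Eventually.of_forall this)
    · have := fun n => (hinc n s t hs hst ht).2 i j
      simp only [inc, inv_mul_snd] at this ⊢
      exact le_of_tendsto (((lim2 i j t ht').sub (lim2 i j s hs')).sub
        ((lim1 i s hs').mul ((lim1 j t ht').sub (lim1 j s hs')))).abs (Eventually.of_forall this)
  set B : ℝ := K * zeta 1 with hBdef
  have hB : 0 ≤ B := mul_nonneg hK0 (zeta_nonneg zero_le_one le_rfl)
  have hxsB : ∀ n, ∀ u ∈ Set.Icc (0 : ℝ) 1, ∀ i, |(xs n u).1.1 i| ≤ B := by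
    intro n u hu i
    have h0 : (xs n 0).1.1 i = 0 := by rw [(hxs n).2]; rfl
    rcases hu.1.eq_or_lt with h | h
    · rw [← h, h0]
      simpa using hB
    · have := (hinc n 0 u le_rfl h hu.2).1 i
      simp only [inc, inv_mul_fst, h0, sub_zero] at this
      exact this.trans (mul_le_mul_of_nonneg_left (phiP_le hp0 hu.1 hu.2) hK0)
  have hxB : ∀ u ∈ Set.Icc (0 : ℝ) 1, ∀ i, |(x u).1.1 i| ≤ B := fun u hu i =>
    le_of_tendsto (lim1 i u hu).abs (Eventually.of_forall fun n => hxsB n u hu i)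
  have hphi0 := phiP_tendsto hp0 hφ hlim1
  have hω1 : Tendsto (fun h => K * phiP p h) (nhdsWithin 0 (Set.Ioi 0)) (nhds 0) := by
    simpa using hphi0.const_mul K
  have hω2 : Tendsto (fun h => (K * phiP p h) ^ 2 + B * (K * phiP p h))
      (nhdsWithin 0 (Set.Ioi 0)) (nhds 0) := by
    simpa using (hω1.pow 2).add (hω1.const_mul B)
  have uni1 : ∀ τ : ℝ, 0 < τ → ∀ i, ∀ᶠ n in atTop, ∀ u ∈ Set.Icc (0 : ℝ) 1,
      |(xs n u).1.1 i - (x u).1.1 i| ≤ τ := fun τ hτ i =>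
    uniform_of_modulus (fun n u => (xs n u).1.1 i) (fun u => (x u).1.1 i) _ hω1
      (fun n s t hs hst ht => by
        have := (hinc n s t hs hst ht).1 i
        rwa [inc, inv_mul_fst] at this) (lim1 i) hτ
  have uni2 : ∀ τ : ℝ, 0 < τ → ∀ i j, ∀ᶠ n in atTop, ∀ u ∈ Set.Icc (0 : ℝ) 1,
      |(xs n u).1.2 i j - (x u).1.2 i j| ≤ τ := fun τ hτ i j =>
    uniform_of_modulus (fun n u => (xs n u).1.2 i j) (fun u => (x u).1.2 i j) _ hω2
      (fun n s t hs hst ht => by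
        have e1 := (hinc n s t hs hst ht).1 j
        have e2 := (hinc n s t hs hst ht).2 i j
        rw [inc, inv_mul_fst] at e1
        rw [inc, inv_mul_snd] at e2
        have e3 : |(xs n s).1.1 i * ((xs n t).1.1 j - (xs n s).1.1 j)|
            ≤ B * (K * phiP p (t - s)) := by
          rw [abs_mul]
          exact mul_le_mul (hxsB n s ⟨hs, hst.le.trans ht⟩ i) e1 (abs_nonneg _) hB
        rw [abs_le] at *
        constructor <;> linarith) (lim2 i j) hτ
  set C : ℝ := (d : ℝ) + 4 * (d : ℝ) ^ 2 with hC
  have hC0 : 0 ≤ C := by positivity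
  have key : ∀ ε : ℝ, 0 < ε → ∀ᶠ n in atTop, ∀ r ∈ dPhiSet φ (xs n) x, r ≤ ε := by
    intro ε hε
    have hsmall : Tendsto (fun h => C * (2 * K) * (phiP p h / φ h))
        (nhdsWithin 0 (Set.Ioi 0)) (nhds 0) := by
      simpa using hlim1.const_mul (C * (2 * K))
    obtain ⟨δ, hδ, hδε⟩ := mem_nhdsGT_iff_exists_Ioo_subset.1 (hsmall.eventually_lt_const hε)
    have hδ : 0 < δ := hδ
    set δ' := min δ 1 with hδ'
    have hδpos : 0 < δ' := lt_min hδ one_pos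
    have hm := hφ.pos hp0 hδpos (min_le_right _ _)
    -- `η` makes the uniform estimate at scales `≥ δ'` at most `ε`; `τ` is the entrywise
    -- accuracy that `entryLe_inc_diff` requires for it.
    set η : ℝ := ε * φ δ' / (C + 1) with hη
    have hη0 : 0 < η := by positivity
    set τ : ℝ := min (η / 2) (η ^ 2 / (2 + 8 * B)) with hτ
    have hτ0 : 0 < τ := lt_min (by positivity) (by positivity)
    have hτ1 : 2 * τ ≤ η := by linarith [min_le_left (η / 2) (η ^ 2 / (2 + 8 * B))]
    have hτ2 : (2 + 8 * B) * τ ≤ η ^ 2 := by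
      have := min_le_right (η / 2) (η ^ 2 / (2 + 8 * B))
      rw [le_div_iff₀ (by positivity)] at this
      rw [mul_comm]
      exact this
    filter_upwards [eventually_all.2 (uni1 τ hτ0),
      eventually_all.2 fun i => eventually_all.2 (uni2 τ hτ0 i)] with n hn1 hn2
    rintro _ ⟨s, t, hs, hst, ht, rfl⟩
    have hts : 0 < t - s := sub_pos.2 hst
    have hts1 : t - s ≤ 1 := by linarith
    have hφts := hφ.pos hp0 hts hts1
    rcases lt_or_ge (t - s) δ with hlt | hge
    · have hρ : 0 ≤ K * phiP p (t - s) := mul_nonneg hK0 (phiP_pos hp0 hts hts1).le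
      have e1 := (EntryLe.reach (by positivity)
        ((hinc n s t hs hst ht).inv_mul hρ (hincx s t hs hst ht))).gnorm_le
      have e2 : C * (2 * K) * (phiP p (t - s) / φ (t - s)) < ε := hδε ⟨hts, hlt⟩
      refine le_trans ?_ e2.le
      rw [← mul_div_assoc]
      gcongr
      linarith
    · have hge' : δ' ≤ t - s := (min_le_left _ _).trans hge
      have e1 := (EntryLe.reach hη0.le (entryLe_inc_diff (xs n) x s t B τ η hτ1 hτ2
        (hxsB n) hxB hn1 hn2 ⟨hs, hst.le.trans ht⟩ ⟨hs.trans hst.le, ht⟩)).gnorm_le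
      rw [div_le_iff₀ hφts]
      have e2 := hφ.mono hp0 hδpos.le hge' hts1
      have e3 : (C + 1) * η = ε * φ δ' := by
        rw [hη]
        field_simp
      nlinarith
  rw [Metric.tendsto_nhds]
  intro ε hε
  filter_upwards [key (ε / 2) (by positivity)] with n hn
  have h1 : dPhi φ (xs n) x ≤ ε / 2 := Real.sSup_le hn (by positivity)
  have h2 : 0 ≤ dPhi φ (xs n) x := by
    refine Real.sSup_nonneg ?_
    rintro _ ⟨s, t, hs, hst, ht, rfl⟩
    exact div_nonneg (gnorm_nonneg _) (hφ.pos hp0 (sub_pos.2 hst) (by linarith)).le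
  rw [Real.dist_eq, sub_zero, abs_of_nonneg h2]
  linarith

end PaperFV
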